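/- arXiv:1610.02731 — 5 statements merged into one kernel-verified Lean document; each statement's English description precedes it below -/
import Mathlib

section
/- A representation of the algebra F_{d,n} of dimension vector (v,u) is θ⁺-semistable if and only if it is θ⁺-stable. -/
/-- A `(v,u)`-dimensional representation of the algebra `F_{d,n}`: linear maps
`e : ℂ^{v₀} → ℂ^u`, `A p : ℂ^{v_{p+1}} → ℂ^{v_p}` (the paper's `A_{p+1}`, for `p+1 < d`),
`f q : ℂ^u → ℂ^{v₀}` (the paper's `f_{q+1}`, for `q+1 < n`) and
`B p q : ℂ^{v_p} → ℂ^{v_{p+1}}` (the paper's `B_{p+1,q+1}`), satisfying the relations of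
`F_{d,n}`.  Indices outside the relevant ranges are unconstrained junk. -/
structure FRep (d n u : ℕ) (v : ℕ → ℕ) where
  e : (Fin (v 0) → ℂ) →ₗ[ℂ] (Fin u → ℂ)
  A : (p : ℕ) → (Fin (v (p + 1)) → ℂ) →ₗ[ℂ] (Fin (v p) → ℂ)
  f : (q : ℕ) → (Fin u → ℂ) →ₗ[ℂ] (Fin (v 0) → ℂ)
  B : (p q : ℕ) → (Fin (v p) → ℂ) →ₗ[ℂ] (Fin (v (p + 1)) → ℂ)
  rel1 : d = 1 → ∀ q, q + 1 < n → (f q).comp e = 0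
  rel2 : 2 ≤ d → ∀ q, q + 1 < n → (A 0).comp (B 0 q) + (f q).comp e = 0
  rel3 : ∀ p q, p + 2 < d → q + 1 < n →
    (A (p + 1)).comp (B (p + 1) q) = (B p q).comp (A p)
  rel4 : 2 ≤ d → ∀ q, q + 1 < n → (B (d - 2) q).comp (A (d - 2)) = 0

/-- A subrepresentation `(S₀,…,S_{d−1},S_∞)` of a representation of `F_{d,n}`. -/
structure IsSubrep (d n u : ℕ) (v : ℕ → ℕ) (R : FRep d n u v)
    (S : (p : ℕ) → Submodule ℂ (Fin (v p) → ℂ)) (Sinf : Submodule ℂ ℂ) : Prop where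
  hA : ∀ p, p + 1 < d → ∀ x ∈ S (p + 1), R.A p x ∈ S p
  hB : ∀ p q, p + 1 < d → q + 1 < n → ∀ x ∈ S p, R.B p q x ∈ S (p + 1)
  he : Sinf = ⊥ → ∀ x ∈ S 0, R.e x = 0
  hf : Sinf = ⊤ → ∀ q, q + 1 < n → ∀ y, R.f q y ∈ S 0

/-- `θ⁺`-semistability: every subrepresentation satisfies
`Σ_p dim S_p ≤ (Σ_p v_p) · dim S_∞`. -/
def Semistable (d n u : ℕ) (v : ℕ → ℕ) (R : FRep d n u v) : Prop :=
  ∀ (S : (p : ℕ) → Submodule ℂ (Fin (v p) → ℂ)) (Sinf : Submodule ℂ ℂ),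
    IsSubrep d n u v R S Sinf →
      ∑ p ∈ Finset.range d, Module.finrank ℂ (S p)
        ≤ (∑ p ∈ Finset.range d, v p) * Module.finrank ℂ Sinf

/-- `θ⁺`-stability: every subrepresentation other than the zero one and the whole one
satisfies the strict inequality. -/
def Stable (d n u : ℕ) (v : ℕ → ℕ) (R : FRep d n u v) : Prop :=
  ∀ (S : (p : ℕ) → Submodule ℂ (Fin (v p) → ℂ)) (Sinf : Submodule ℂ ℂ),
    IsSubrep d n u v R S Sinf →
      ¬((∀ p, p < d → S p = ⊥) ∧ Sinf = ⊥) →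
      ¬((∀ p, p < d → S p = ⊤) ∧ Sinf = ⊤) →
        ∑ p ∈ Finset.range d, Module.finrank ℂ (S p)
          < (∑ p ∈ Finset.range d, v p) * Module.finrank ℂ Sinf

/-!
Since `S_∞` is a subspace of a line, the bound `(∑ v_p) · dim S_∞` is either `0` or `∑ v_p`, hence
either the least or the greatest value that `∑ dim S_p` can take. Equality therefore forces the
zero or the whole representation, which are exactly the two cases that stability leaves out.
-/

section FinrankSum

variable {K ι : Type*} [DivisionRing K] {V : ι → Type*} [∀ i, AddCommGroup (V i)]
  [∀ i, Module K (V i)] [∀ i, FiniteDimensional K (V i)]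

theorem sum_finrank_eq_iff_forall_eq_top {s : Finset ι} {W : ∀ i, Submodule K (V i)} :
    ∑ i ∈ s, Module.finrank K (W i) = ∑ i ∈ s, Module.finrank K (V i) ↔ ∀ i ∈ s, W i = ⊤ := by
  rw [Finset.sum_eq_sum_iff_of_le fun i _ => (W i).finrank_le]
  refine forall₂_congr fun i _ => ⟨Submodule.eq_top_of_finrank_eq, fun hW => ?_⟩
  rw [hW, finrank_top]

theorem sum_finrank_eq_mul_finrank_iff_bot_or_top {L : Type*} [AddCommGroup L] [Module K L]
    [IsSimpleModule K L] {s : Finset ι} {W : ∀ i, Submodule K (V i)} {T : Submodule K L} :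
    ∑ i ∈ s, Module.finrank K (W i) = (∑ i ∈ s, Module.finrank K (V i)) * Module.finrank K T ↔
      ((∀ i ∈ s, W i = ⊥) ∧ T = ⊥) ∨ ((∀ i ∈ s, W i = ⊤) ∧ T = ⊤) := by
  rcases eq_bot_or_eq_top T with rfl | rfl
  · simp
  · have hL : Module.finrank K L = 1 := isSimpleModule_iff_finrank_eq_one.mp inferInstance
    simp [hL, sum_finrank_eq_iff_forall_eq_top]

end FinrankSum

theorem semistable_iff_stable_general (d n u : ℕ) (v : ℕ → ℕ) (R : FRep d n u v) :
    Semistable d n u v R ↔ Stable d n u v R := by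
  refine forall₃_congr fun S Sinf _ => ?_
  have extremal_iff : ∑ p ∈ Finset.range d, Module.finrank ℂ (S p) =
        (∑ p ∈ Finset.range d, v p) * Module.finrank ℂ Sinf ↔
      ((∀ p, p < d → S p = ⊥) ∧ Sinf = ⊥) ∨ ((∀ p, p < d → S p = ⊤) ∧ Sinf = ⊤) := by
    simpa only [Module.finrank_fin_fun, Finset.mem_range] using
      sum_finrank_eq_mul_finrank_iff_bot_or_top (s := Finset.range d) (W := S) (T := Sinf)
  rw [le_iff_eq_or_lt, or_iff_not_imp_left, extremal_iff, not_or, and_imp]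

/-- first assertion of Lemma 7.3: a `(v,u)`-dimensional representation of
`F_{d,n}` is `θ⁺`-semistable if and only if it is `θ⁺`-stable. -/
theorem semistable_iff_stable (d n u : ℕ) (hd : 1 ≤ d) (hn : 1 ≤ n) (v : ℕ → ℕ)
    (hu : v 0 < u) (hv : ∀ p, p + 1 < d → v (p + 1) < v p) (hpos : 0 < v (d - 1))
    (R : FRep d n u v) :
    Semistable d n u v R ↔ Stable d n u v R :=
  semistable_iff_stable_general d n u v R
end

section
/- A representation of the algebra F_{d,n} of dimension vector (v,u) is θ⁺-semistable if and only if the linear maps e, A_1, …, A_{d−1} are all injective. Equivalently, e and all A_p are injective if and only if every tuple of subspaces (S_0,…,S_{d−1}) with S_p ⊆ ℂ^{v_p}, A_p(S_p) ⊆ S_{p−1} and B_{p,q}(S_{p−1}) ⊆ S_p for all p, q, and S_0 ⊆ ker e, is the zero tuple. -/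
/-!
A tuple `S` preserved by the `A p`, with `S 0 ⊆ ker e`, lies in the kernels of the composites
`e ∘ A 0 ∘ ⋯ ∘ A (p - 1)`. The relations of `F_{d,n}` move `B p q` to the left through the next such
composite, turning it into `-e ∘ f q` times this one; so these kernels are also preserved by the
`B p q`, and they form the largest subrepresentation with `S_∞ = 0`. They all vanish exactly when
`e` and the `A p` are injective. Semistability is a condition on `S_∞ = 0` only, since its
inequality is automatic for `S_∞ = ℂ`.
-/

section Chain

open LinearMap

variable {K N : Type*} {M : ℕ → Type*} [Semiring K] [AddCommMonoid N] [Module K N]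
  [∀ p, AddCommMonoid (M p)] [∀ p, Module K (M p)]

/-- The composite `e ∘ A 0 ∘ ⋯ ∘ A (p - 1) : M p → N` along a chain of linear maps; in the paper's
indexing it is `e A₁ ⋯ A_p`. Its kernels bound the tuples of submodules that are preserved by the
`A p` and start inside `ker e`. -/
def chainComp (e : M 0 →ₗ[K] N) (A : ∀ p, M (p + 1) →ₗ[K] M p) : ∀ p, M p →ₗ[K] N
  | 0 => e
  | p + 1 => chainComp e A p ∘ₗ A p

variable {e : M 0 →ₗ[K] N} {A : ∀ p, M (p + 1) →ₗ[K] M p} {d : ℕ}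

theorem forall_injective_chainComp_iff (hd : 0 < d) :
    (∀ p < d, Function.Injective (chainComp e A p)) ↔
      Function.Injective e ∧ ∀ p, p + 1 < d → Function.Injective (A p) := by
  constructor
  · intro h
    exact ⟨h 0 hd, fun p hp => Function.Injective.of_comp (h (p + 1) hp)⟩
  · rintro ⟨he, hA⟩ p
    induction p with
    | zero => exact fun _ => he
    | succ p ih => exact fun hp => (ih (by lia)).comp (hA p hp)

theorem le_ker_chainComp {S : ∀ p, Submodule K (M p)} (he : S 0 ≤ ker e)
    (hA : ∀ p, p + 1 < d → S (p + 1) ≤ (S p).comap (A p)) :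
    ∀ p < d, S p ≤ ker (chainComp e A p)
  | 0, _ => he
  | p + 1, hp =>
    (hA p hp).trans <| Submodule.comap_mono <| le_ker_chainComp he hA p (by lia)

variable {f : N →ₗ[K] M 0} {B : ∀ p, M p →ₗ[K] M (p + 1)}

theorem chainComp_succ_comp_add_eq_zero (hf : 1 < d → A 0 ∘ₗ B 0 + f ∘ₗ e = 0)
    (hB : ∀ p, p + 2 < d → A (p + 1) ∘ₗ B (p + 1) = B p ∘ₗ A p) :
    ∀ p, p + 1 < d →
      chainComp e A (p + 1) ∘ₗ B p + (e ∘ₗ f) ∘ₗ chainComp e A p = 0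
  | 0, hp =>
    calc (e ∘ₗ A 0) ∘ₗ B 0 + (e ∘ₗ f) ∘ₗ e
      _ = e ∘ₗ (A 0 ∘ₗ B 0 + f ∘ₗ e) := by rw [comp_add, comp_assoc, comp_assoc]
      _ = 0 := by rw [hf hp, comp_zero]
  | p + 1, hp =>
    calc (chainComp e A (p + 1) ∘ₗ A (p + 1)) ∘ₗ B (p + 1) +
          (e ∘ₗ f) ∘ₗ chainComp e A p ∘ₗ A p
      _ = (chainComp e A (p + 1) ∘ₗ B p + (e ∘ₗ f) ∘ₗ chainComp e A p) ∘ₗ A p := by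
        rw [comp_assoc, hB p hp, add_comp, comp_assoc _ (B p), comp_assoc _ (chainComp e A p)]
      _ = 0 := by rw [chainComp_succ_comp_add_eq_zero hf hB p (by lia), zero_comp]

theorem ker_chainComp_le_comap (hf : 1 < d → A 0 ∘ₗ B 0 + f ∘ₗ e = 0)
    (hB : ∀ p, p + 2 < d → A (p + 1) ∘ₗ B (p + 1) = B p ∘ₗ A p) (p : ℕ) (hp : p + 1 < d) :
    ker (chainComp e A p) ≤ (ker (chainComp e A (p + 1))).comap (B p) := by
  intro x hx
  have hsum := LinearMap.congr_fun (chainComp_succ_comp_add_eq_zero hf hB p hp) x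
  simpa [mem_ker.mp hx] using hsum

end Chain

section Representation

variable {d n u : ℕ} {v : ℕ → ℕ} {R : FRep d n u v} {S : ∀ p, Submodule ℂ (Fin (v p) → ℂ)}

theorem isSubrep_bot_iff :
    IsSubrep d n u v R S ⊥ ↔
      (∀ p, p + 1 < d → ∀ x ∈ S (p + 1), R.A p x ∈ S p) ∧
      (∀ p q, p + 1 < d → q + 1 < n → ∀ x ∈ S p, R.B p q x ∈ S (p + 1)) ∧
      ∀ x ∈ S 0, R.e x = 0 :=
  ⟨fun h => ⟨h.hA, h.hB, h.he rfl⟩,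
    fun ⟨hA, hB, he⟩ => ⟨hA, hB, fun _ => he, fun h => absurd h bot_ne_top⟩⟩

/-- The largest subrepresentation with `S_∞ = 0`: the kernels of the composites `e A₁ ⋯ A_p`. -/
def FRep.iteratedKer (R : FRep d n u v) (p : ℕ) : Submodule ℂ (Fin (v p) → ℂ) :=
  LinearMap.ker (chainComp (M := fun p => Fin (v p) → ℂ) R.e R.A p)

theorem IsSubrep.le_iteratedKer (h : IsSubrep d n u v R S ⊥) : ∀ p < d, S p ≤ R.iteratedKer p :=
  le_ker_chainComp (h.he rfl) h.hA

theorem FRep.isSubrep_iteratedKer (R : FRep d n u v) : IsSubrep d n u v R R.iteratedKer ⊥ :=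
  isSubrep_bot_iff.mpr ⟨fun _ _ _ hx => hx,
    fun p q hp hq => ker_chainComp_le_comap (B := fun p => R.B p q) (fun hd => R.rel2 hd q hq)
      (fun p hp => R.rel3 p q hp hq) p hp,
    fun _ hx => hx⟩

theorem FRep.forall_iteratedKer_eq_bot_iff (hd : 0 < d) (R : FRep d n u v) :
    (∀ p < d, R.iteratedKer p = ⊥) ↔
      Function.Injective R.e ∧ ∀ p, p + 1 < d → Function.Injective (R.A p) := by
  simp only [FRep.iteratedKer, LinearMap.ker_eq_bot]
  exact forall_injective_chainComp_iff hd

theorem injective_iff_forall_isSubrep_bot_eq_bot (hd : 0 < d) :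
    (Function.Injective R.e ∧ ∀ p, p + 1 < d → Function.Injective (R.A p)) ↔
      ∀ S, IsSubrep d n u v R S ⊥ → ∀ p < d, S p = ⊥ := by
  rw [← R.forall_iteratedKer_eq_bot_iff hd]
  exact ⟨fun hker _ hS p hp => le_bot_iff.mp ((hS.le_iteratedKer p hp).trans_eq (hker p hp)),
    fun h => h _ R.isSubrep_iteratedKer⟩

theorem semistable_iff_forall_isSubrep_bot_eq_bot :
    Semistable d n u v R ↔ ∀ S, IsSubrep d n u v R S ⊥ → ∀ p < d, S p = ⊥ := by
  constructor
  · intro hR S hS p hp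
    have hsum : ∑ p ∈ Finset.range d, Module.finrank ℂ (S p) = 0 := by
      simpa only [finrank_bot, mul_zero, Nat.le_zero] using hR S ⊥ hS
    exact Submodule.finrank_eq_zero.mp
      (Finset.sum_eq_zero_iff.mp hsum p (Finset.mem_range.mpr hp))
  · intro h S Sinf hS
    obtain rfl | rfl := eq_bot_or_eq_top Sinf
    · have hzero : ∀ p ∈ Finset.range d, Module.finrank ℂ (S p) = 0 := fun p hp =>
        Submodule.finrank_eq_zero.mpr (h S hS p (Finset.mem_range.mp hp))
      rw [Finset.sum_eq_zero hzero]
      exact Nat.zero_le _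
    · rw [finrank_top, Module.finrank_self, mul_one]
      exact Finset.sum_le_sum fun p _ => (S p).finrank_le.trans_eq (Module.finrank_fin_fun ℂ)

theorem semistable_iff_injective_general (hd : 0 < d) (R : FRep d n u v) :
    (Semistable d n u v R ↔
      (Function.Injective R.e ∧ ∀ p, p + 1 < d → Function.Injective (R.A p))) ∧
    ((Function.Injective R.e ∧ ∀ p, p + 1 < d → Function.Injective (R.A p)) ↔
      ∀ S : (p : ℕ) → Submodule ℂ (Fin (v p) → ℂ),
        (∀ p, p + 1 < d → ∀ x ∈ S (p + 1), R.A p x ∈ S p) →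
        (∀ p q, p + 1 < d → q + 1 < n → ∀ x ∈ S p, R.B p q x ∈ S (p + 1)) →
        (∀ x ∈ S 0, R.e x = 0) →
        ∀ p, p < d → S p = ⊥) := by
  have hinj := injective_iff_forall_isSubrep_bot_eq_bot (R := R) hd
  refine ⟨semistable_iff_forall_isSubrep_bot_eq_bot.trans hinj.symm, ?_⟩
  simpa only [isSubrep_bot_iff, and_imp] using hinj

end Representation

/-- second assertion of Lemma 7.3: a representation of `F_{d,n}` is
`θ⁺`-semistable iff `e, A₁, …, A_{d−1}` are all injective; equivalently, `e` and all `A_p`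
are injective iff every tuple of subspaces `(S₀,…,S_{d−1})` preserved by the `A_p` and
`B_{p,q}` and with `S₀ ⊆ ker e` is the zero tuple. -/
theorem semistable_iff_injective (d n u : ℕ) (hd : 1 ≤ d) (hn : 1 ≤ n) (v : ℕ → ℕ)
    (hu : v 0 < u) (hv : ∀ p, p + 1 < d → v (p + 1) < v p) (hpos : 0 < v (d - 1))
    (R : FRep d n u v) :
    (Semistable d n u v R ↔
      (Function.Injective R.e ∧ ∀ p, p + 1 < d → Function.Injective (R.A p))) ∧
    ((Function.Injective R.e ∧ ∀ p, p + 1 < d → Function.Injective (R.A p)) ↔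
      ∀ S : (p : ℕ) → Submodule ℂ (Fin (v p) → ℂ),
        (∀ p, p + 1 < d → ∀ x ∈ S (p + 1), R.A p x ∈ S p) →
        (∀ p q, p + 1 < d → q + 1 < n → ∀ x ∈ S p, R.B p q x ∈ S (p + 1)) →
        (∀ x ∈ S 0, R.e x = 0) →
        ∀ p, p < d → S p = ⊥) :=
  semistable_iff_injective_general hd R
end

section
/- Fix integers n ≥ 2 and 0 < a < r. Let R be the set of tuples (e, f_1,…,f_{n−1}) with e : ℂ^a → ℂ^r an injective linear map and f_q : ℂ^r → ℂ^a linear maps satisfying f_q∘e = 0 for all q, and let GL(a,ℂ) act on R by g·(e, f_1,…,f_{n−1}) = (e∘g^{−1}, g∘f_1,…, g∘f_{n−1}). Then the map sending (e, f_1,…,f_{n−1}) to (W, φ_1,…,φ_{n−1}), where W = Im e and φ_q : ℂ^r/W → W is the map induced by the endomorphism e∘f_q of ℂ^r (which vanishes on W and has image contained in W), induces a bijection from the orbit space R/GL(a,ℂ) onto the set of tuples (W, φ_1,…,φ_{n−1}) with W an a-dimensional subspace of ℂ^r and each φ_q a linear map ℂ^r/W → W. -/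
noncomputable section

/-- The set `R` of tuples `(e, f₁,…,f_{n−1})` with `e : ℂ^a → ℂ^r` injective and
`f_q : ℂ^r → ℂ^a` satisfying `f_q ∘ e = 0` for all `q`. -/
def Rep6 (n r a : ℕ) : Type :=
  {x : ((Fin a → ℂ) →ₗ[ℂ] (Fin r → ℂ)) × (Fin (n - 1) → (Fin r → ℂ) →ₗ[ℂ] (Fin a → ℂ)) //
    Function.Injective x.1 ∧ ∀ q, (x.2 q).comp x.1 = 0}

/-- The orbit relation of the `GL(a,ℂ)`-action
`g·(e, f₁,…,f_{n−1}) = (e∘g⁻¹, g∘f₁,…,g∘f_{n−1})`. -/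
def GLRel6 (n r a : ℕ) (x y : Rep6 n r a) : Prop :=
  ∃ g : (Fin a → ℂ) ≃ₗ[ℂ] (Fin a → ℂ),
    y.val.1 = x.val.1.comp g.symm.toLinearMap ∧
    ∀ q, y.val.2 q = g.toLinearMap.comp (x.val.2 q)

/-- The total space of `T^∨Gr(a,r)^{⊕(n−1)}`: tuples `(W, φ₁,…,φ_{n−1})` with `W` an
`a`-dimensional subspace of `ℂ^r` and each `φ_q : ℂ^r/W → W` linear. -/
def CotGrass6 (n r a : ℕ) : Type :=
  Σ W : {W : Submodule ℂ (Fin r → ℂ) // Module.finrank ℂ W = a},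
    Fin (n - 1) → ((Fin r → ℂ) ⧸ W.val) →ₗ[ℂ] W.val

/-! The automorphisms `g` of `U` act simply transitively on the injective maps `e : U → V` with a
given image `W`, and they leave the endomorphisms `e ∘ f_q` unchanged. As `e` is left cancellable,
an orbit is determined by `W` together with these endomorphisms. The endomorphisms that occur are
those which factor as `V → V ⧸ W → W → V`. -/

section

variable (R U V ι : Type*) [Ring R] [AddCommGroup U] [Module R U] [AddCommGroup V] [Module R V]

/-- Representations of `F_{1,n}` on a pair of modules `(U, V)` whose arrow `e : U → V` is injective;
the arrows `f_q : V → U` are indexed by an arbitrary type `ι`. It unfolds to `Rep6` for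
`U = ℂ^a`, `V = ℂ^r` and `ι = Fin (n - 1)`. -/
def InjectiveRep : Type _ :=
  {x : (U →ₗ[R] V) × (ι → V →ₗ[R] U) // Function.Injective x.1 ∧ ∀ q, (x.2 q).comp x.1 = 0}

/-- The total space of the sum of `ι` copies of the cotangent bundle of the Grassmannian of
submodules of `V` that are isomorphic to `U`. For `U = ℂ^a` and `V = ℂ^r`, being isomorphic to `U`
means having dimension `a`. -/
def CotangentSum : Type _ :=
  Σ W : {W : Submodule R V // Nonempty (U ≃ₗ[R] W)}, ι → (V ⧸ W.val) →ₗ[R] W.val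

end

variable {R U V ι : Type*} [Ring R] [AddCommGroup U] [Module R U] [AddCommGroup V] [Module R V]

theorem exists_eq_comp_symm_iff_range_eq {U' : Type*} [AddCommGroup U'] [Module R U']
    {e : U →ₗ[R] V} {e' : U' →ₗ[R] V} (he : Function.Injective e) (he' : Function.Injective e') :
    (∃ g : U ≃ₗ[R] U', e' = e.comp g.symm.toLinearMap) ↔
      LinearMap.range e = LinearMap.range e' := by
  constructor
  · rintro ⟨g, rfl⟩
    exact (LinearMap.range_comp_of_range_eq_top e g.symm.range).symm
  · intro h
    let g := LinearEquiv.ofInjective e he ≪≫ₗ LinearEquiv.ofEq _ _ h ≪≫ₗ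
      (LinearEquiv.ofInjective e' he').symm
    have e_symm : ∀ u, e (g.symm u) = e' u := fun u =>
      congrArg Subtype.val ((LinearEquiv.ofInjective e he).apply_symm_apply _)
    exact ⟨g, LinearMap.ext fun u => (e_symm u).symm⟩

namespace CotangentSum

theorem ext {p p' : CotangentSum R U V ι} (base_eq : p.1.val = p'.1.val)
    (fiber_eq : ∀ q v, (p.2 q (Submodule.Quotient.mk v) : V) = p'.2 q (Submodule.Quotient.mk v)) :
    p = p' := by
  obtain ⟨⟨W, hW⟩, φ⟩ := p
  obtain ⟨⟨W', hW'⟩, φ'⟩ := p'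
  obtain rfl : W = W' := base_eq
  obtain rfl : φ = φ' :=
    funext fun q => Submodule.linearMap_qext W (LinearMap.ext fun v => Subtype.ext (fiber_eq q v))
  rfl

end CotangentSum

namespace InjectiveRep

/-- The relation of lying in the same orbit of the action
`g • (e, f) = (e ∘ g⁻¹, g ∘ f)` of the automorphisms of `U`; it unfolds to `GLRel6` in the case of
`Rep6`. -/
def OrbitRel (x y : InjectiveRep R U V ι) : Prop :=
  ∃ g : U ≃ₗ[R] U,
    y.val.1 = x.val.1.comp g.symm.toLinearMap ∧ ∀ q, y.val.2 q = g.toLinearMap.comp (x.val.2 q)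

theorem orbitRel_iff {x y : InjectiveRep R U V ι} :
    OrbitRel x y ↔ LinearMap.range x.val.1 = LinearMap.range y.val.1 ∧
      ∀ q v, x.val.1 (x.val.2 q v) = y.val.1 (y.val.2 q v) := by
  constructor
  · rintro ⟨g, he, hf⟩
    refine ⟨(exists_eq_comp_symm_iff_range_eq x.2.1 y.2.1).1 ⟨g, he⟩, fun q v => ?_⟩
    simp [he, hf]
  · rintro ⟨range_eq, comp_eq⟩
    obtain ⟨g, he⟩ := (exists_eq_comp_symm_iff_range_eq x.2.1 y.2.1).2 range_eq
    refine ⟨g, he, fun q => LinearMap.ext fun v => y.2.1 ?_⟩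
    calc y.val.1 (y.val.2 q v) = x.val.1 (x.val.2 q v) := (comp_eq q v).symm
      _ = y.val.1 (g (x.val.2 q v)) := by simp [he]

/-- The map `φ_q : V ⧸ W → W` induced by `e ∘ f_q`, where `W` is the image of `e`. -/
def inducedMap (x : InjectiveRep R U V ι) (q : ι) :
    (V ⧸ LinearMap.range x.val.1) →ₗ[R] LinearMap.range x.val.1 :=
  (LinearMap.range x.val.1).liftQ (x.val.1.rangeRestrict.comp (x.val.2 q)) <|
    LinearMap.range_le_ker_iff.2 <| by
      rw [LinearMap.comp_assoc, x.2.2 q, LinearMap.comp_zero]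

/-- The point `(W, φ)` of the cotangent sum attached to a representation `(e, f)`. -/
def toCotangentSum (x : InjectiveRep R U V ι) : CotangentSum R U V ι :=
  ⟨⟨LinearMap.range x.val.1, ⟨LinearEquiv.ofInjective x.val.1 x.2.1⟩⟩, x.inducedMap⟩

theorem toCotangentSum_fst (x : InjectiveRep R U V ι) :
    x.toCotangentSum.1.val = LinearMap.range x.val.1 :=
  rfl

theorem toCotangentSum_snd_mk (x : InjectiveRep R U V ι) (q : ι) (v : V) :
    (x.toCotangentSum.2 q (Submodule.Quotient.mk v) : V) = x.val.1 (x.val.2 q v) :=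
  rfl

theorem toCotangentSum_eq_iff {x y : InjectiveRep R U V ι} :
    x.toCotangentSum = y.toCotangentSum ↔ OrbitRel x y := by
  rw [orbitRel_iff]
  constructor
  · intro h
    refine ⟨?_, fun q v => ?_⟩
    · rw [← toCotangentSum_fst, ← toCotangentSum_fst, h]
    · rw [← toCotangentSum_snd_mk, ← toCotangentSum_snd_mk, h]
  · rintro ⟨range_eq, comp_eq⟩
    exact CotangentSum.ext range_eq comp_eq

/-- The representation with `e : U ≃ W ↪ V` and `f_q : V → V ⧸ W → W ≃ U`. -/
def ofLinearEquiv {W : Submodule R V} (i : U ≃ₗ[R] W) (φ : ι → (V ⧸ W) →ₗ[R] W) :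
    InjectiveRep R U V ι :=
  ⟨(W.subtype.comp i.toLinearMap, fun q => i.symm.toLinearMap.comp ((φ q).comp W.mkQ)),
    W.injective_subtype.comp i.injective, fun q => LinearMap.ext fun u => by
      simp [(Submodule.Quotient.mk_eq_zero W).2 (i u).2]⟩

theorem toCotangentSum_ofLinearEquiv {W : Submodule R V} (i : U ≃ₗ[R] W)
    (φ : ι → (V ⧸ W) →ₗ[R] W) : (ofLinearEquiv i φ).toCotangentSum = ⟨⟨W, ⟨i⟩⟩, φ⟩ := by
  refine CotangentSum.ext ?_ fun q v => ?_
  · calc LinearMap.range (W.subtype.comp i.toLinearMap)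
        = LinearMap.range W.subtype := LinearMap.range_comp_of_range_eq_top _ i.range
      _ = W := W.range_subtype
  · exact congrArg Subtype.val (i.apply_symm_apply (φ q (Submodule.Quotient.mk v)))

theorem toCotangentSum_surjective :
    Function.Surjective (toCotangentSum : InjectiveRep R U V ι → CotangentSum R U V ι) := by
  rintro ⟨⟨W, ⟨i⟩⟩, φ⟩
  exact ⟨ofLinearEquiv i φ, toCotangentSum_ofLinearEquiv i φ⟩

end InjectiveRep

open InjectiveRep in
theorem minimal_moduli_equiv_cotangent_grassmannian_general (R U V ι : Type*) [Ring R]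
    [AddCommGroup U] [Module R U] [AddCommGroup V] [Module R V] :
    ∃ bij : Quot (OrbitRel : InjectiveRep R U V ι → _ → Prop) ≃ CotangentSum R U V ι,
      ∀ x : InjectiveRep R U V ι,
        (bij (Quot.mk _ x)).1.val = LinearMap.range x.val.1 ∧
        ∀ (q : ι) (v : V),
          ((bij (Quot.mk _ x)).2 q (Submodule.Quotient.mk v) : V) = x.val.1 (x.val.2 q v) := by
  let toCot : Quot (OrbitRel : InjectiveRep R U V ι → _ → Prop) → CotangentSum R U V ι :=
    Quot.lift toCotangentSum fun _ _ => toCotangentSum_eq_iff.2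
  have injective : Function.Injective toCot := by
    rintro ⟨x⟩ ⟨y⟩ h
    exact Quot.sound (toCotangentSum_eq_iff.1 h)
  have surjective : Function.Surjective toCot :=
    (Quot.surjective_lift _).2 toCotangentSum_surjective
  exact ⟨Equiv.ofBijective toCot ⟨injective, surjective⟩,
    fun x => ⟨x.toCotangentSum_fst, x.toCotangentSum_snd_mk⟩⟩

theorem nonempty_linearEquiv_fin_fun_iff {K M : Type*} [Semiring K]
    [StrongRankCondition K] [AddCommMonoid M] [Module K M] [Module.Free K M] [Module.Finite K M]
    {a : ℕ} :
    Nonempty ((Fin a → K) ≃ₗ[K] M) ↔ Module.finrank K M = a := by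
  rw [FiniteDimensional.nonempty_linearEquiv_iff_finrank_eq, Module.finrank_fin_fun, eq_comm]

/-- The case `R = ℂ`, `U = ℂ^a`, `V = ℂ^r` of `CotangentSum`, compared with the total space in which
the Grassmannian is given by the dimension condition. -/
def CotangentSum.equivCotGrass6 (n r a : ℕ) :
    CotangentSum ℂ (Fin a → ℂ) (Fin r → ℂ) (Fin (n - 1)) ≃ CotGrass6 n r a :=
  Equiv.sigmaCongrLeft
    (β := fun W : {W : Submodule ℂ (Fin r → ℂ) // Module.finrank ℂ W = a} =>
      Fin (n - 1) → ((Fin r → ℂ) ⧸ W.val) →ₗ[ℂ] W.val)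
    (Equiv.subtypeEquivRight fun _ => nonempty_linearEquiv_fin_fun_iff)

/-- Proposition 7.4 with Theorem 6.1: the map sending `(e, f₁,…,f_{n−1})`
to `(W, φ₁,…,φ_{n−1})`, where `W = Im e` and `φ_q : ℂ^r/W → W` is induced by the
endomorphism `e∘f_q` of `ℂ^r`, induces a bijection from the orbit space `R/GL(a,ℂ)` onto
the set of tuples `(W, φ₁,…,φ_{n−1})`. -/
theorem minimal_moduli_equiv_cotangent_grassmannian (n r a : ℕ) (hn : 2 ≤ n)
    (ha : 0 < a) (har : a < r) :
    ∃ bij : Quot (GLRel6 n r a) ≃ CotGrass6 n r a,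
      ∀ x : Rep6 n r a,
        (bij (Quot.mk _ x)).1.val = LinearMap.range x.val.1 ∧
        ∀ (q : Fin (n - 1)) (w : Fin r → ℂ),
          ((bij (Quot.mk _ x)).2 q (Submodule.Quotient.mk w) : Fin r → ℂ)
            = x.val.1 (x.val.2 q w) := by
  obtain ⟨bij, bij_spec⟩ := minimal_moduli_equiv_cotangent_grassmannian_general
    ℂ (Fin a → ℂ) (Fin r → ℂ) (Fin (n - 1))
  exact ⟨bij.trans (CotangentSum.equivCotGrass6 n r a), bij_spec⟩

end
end

section
/- Let n ≥ 2 and a ≥ 1 be integers, and let β_0, β_1 ∈ Mat_{(n−1)a × na}(ℂ). Let Φ be the square matrix of size n(n−1)a with n block rows of height (n−1)a and n−1 block columns of width na, whose (p,q) block equals β_0 if p = q, equals β_1 if p = q+1, and vanishes otherwise. If Φ is invertible, then there exist χ ∈ GL((n−1)a,ℂ) and ψ ∈ GL(na,ℂ) such that χ·β_0·ψ^{−1} = (I_{(n−1)a} | 0) and χ·β_1·ψ^{−1} = (0 | I_{(n−1)a}). -/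
open Matrix

/-- The square matrix `Φ` of size `n(n−1)a`, with `n` block rows of height `(n−1)a`
(indexed by `Fin n × Fin ((n−1)a)`) and `n−1` block columns of width `na`
(indexed by `Fin (n−1) × Fin (na)`), whose `(p,q)` block is `β₀` if `p = q`,
`β₁` if `p = q + 1`, and `0` otherwise. -/
def PhiMat (n a : ℕ) (β0 β1 : Matrix (Fin ((n - 1) * a)) (Fin (n * a)) ℂ) :
    Matrix (Fin n × Fin ((n - 1) * a)) (Fin (n - 1) × Fin (n * a)) ℂ :=
  fun pi qj =>
    if pi.1.val = qj.1.val then β0 pi.2 qj.2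
    else if pi.1.val = qj.1.val + 1 then β1 pi.2 qj.2
    else 0

/-- The `(n−1)a × na` matrix `(I | 0)`. -/
def D0 (n a : ℕ) : Matrix (Fin ((n - 1) * a)) (Fin (n * a)) ℂ :=
  fun i j => if j.val = i.val then 1 else 0

/-- The `(n−1)a × na` matrix `(0 | I)`. -/
def D1 (n a : ℕ) : Matrix (Fin ((n - 1) * a)) (Fin (n * a)) ℂ :=
  fun i j => if j.val = i.val + a then 1 else 0

/-!
Call `u : ℤ → V` a *chain* of a pair `b₀, b₁ : V → W` if `b₀ (u i) = b₁ (u (i + 1))` for all `i`.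
Invertibility of `Φ` says that a chain supported in a window of length `m = n - 1` vanishes, while
counting dimensions gives `a` independent chains supported in `[0, m]`. The `(m + 1) * a` values of
these chains are linearly independent: a relation between them yields, after translating the chains,
a chain `P` supported in `[-m, m]` with `P 0 = 0`; its parts to the left and to the right of `0` are
chains supported in windows of length `m`, so `P = 0`, and peeling off one translate at a time
kills every coefficient. The first block row `(b₀, 0, …, 0)` of `Φ` shows that `b₀` is surjective,
so it sends the values at `0, …, m - 1` to a basis of `W`, and in these bases `b₀` and `b₁` are the
two shifts.
-/

open Module Set

section Chains

variable {R V W : Type*} [Ring R] [AddCommGroup V] [Module R V] [AddCommGroup W] [Module R W]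

/-- The *chains* of the pair `(b₀, b₁)` supported in `S`: the sequences `u` vanishing outside `S`
with `b₀ (u i) = b₁ (u (i + 1))`. For finite `S ⊆ ℕ` these are the polynomials `∑ uᵢ Tⁱ` in the
kernel of the matrix pencil `T b₀ - b₁`. -/
def chains (b₀ b₁ : V →ₗ[R] W) (S : Set ℤ) : Submodule R (ℤ → V) where
  carrier := {u | (∀ i, b₀ (u i) = b₁ (u (i + 1))) ∧ ∀ i ∉ S, u i = 0}
  add_mem' hu hv := ⟨fun i => by simp [hu.1 i, hv.1 i], fun i hi => by simp [hu.2 i hi, hv.2 i hi]⟩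
  zero_mem' := by simp
  smul_mem' c u hu := ⟨fun i => by simp [hu.1 i], fun i hi => by simp [hu.2 i hi]⟩

/-- Extension of a finite sequence to `ℤ` by zero. -/
def extendZero (R : Type*) {V : Type*} [Ring R] [AddCommGroup V] [Module R V] (m : ℕ) :
    (Fin m → V) →ₗ[R] (ℤ → V) :=
  ∑ q : Fin m, LinearMap.single R (fun _ : ℤ => V) q ∘ₗ LinearMap.proj q

/-- The block bidiagonal map `Vᵐ → Wᵐ⁺¹` with `b₀` on the diagonal and `b₁` below it, i.e. the
matrix `Φ` in coordinate-free form. -/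
def bidiagonalMap (m : ℕ) (b₀ b₁ : V →ₗ[R] W) : (Fin m → V) →ₗ[R] (Fin (m + 1) → W) :=
  LinearMap.pi fun p => b₀ ∘ₗ LinearMap.proj (p : ℤ) ∘ₗ extendZero R m +
    b₁ ∘ₗ LinearMap.proj ((p : ℤ) - 1) ∘ₗ extendZero R m

theorem extendZero_apply {m : ℕ} (v : Fin m → V) (i : ℤ) :
    extendZero R m v i = ∑ q : Fin m, if i = q then v q else 0 := by
  simp [extendZero, Pi.single_apply]

theorem extendZero_apply_coe {m : ℕ} (v : Fin m → V) (q : Fin m) : extendZero R m v q = v q := by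
  simp [extendZero_apply, Fin.val_inj]

theorem extendZero_apply_of_notMem {m : ℕ} (v : Fin m → V) {i : ℤ} (hi : i ∉ Ico 0 (m : ℤ)) :
    extendZero R m v i = 0 := by
  rw [extendZero_apply]
  refine Finset.sum_eq_zero fun q _ => if_neg ?_
  rintro rfl
  exact hi (by simp)

theorem extendZero_injective (m : ℕ) : Function.Injective (extendZero R (V := V) m) :=
  fun u v h => funext fun q => by
    rw [← extendZero_apply_coe (R := R) u q, h, extendZero_apply_coe]

theorem bidiagonalMap_apply {m : ℕ} (b₀ b₁ : V →ₗ[R] W) (v : Fin m → V) (p : Fin (m + 1)) :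
    bidiagonalMap m b₀ b₁ v p = b₀ (extendZero R m v p) + b₁ (extendZero R m v (p - 1)) :=
  rfl

theorem surjective_of_bidiagonalMap_surjective {m : ℕ} {b₀ b₁ : V →ₗ[R] W}
    (h : Function.Surjective (bidiagonalMap m b₀ b₁)) : Function.Surjective b₀ := by
  intro w
  obtain ⟨v, hv⟩ := h (Pi.single 0 w)
  refine ⟨extendZero R m v 0, ?_⟩
  have hrow := congrFun hv 0
  rw [bidiagonalMap_apply, extendZero_apply_of_notMem v (i := _ - 1) (by simp)] at hrow
  simpa using hrow

theorem chains_Ico_eq_bot_of_bidiagonalMap_injective {m : ℕ} {b₀ b₁ : V →ₗ[R] W}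
    (h : Function.Injective (bidiagonalMap m b₀ b₁)) (c : ℤ) :
    chains b₀ b₁ (Ico c (c + m)) = ⊥ := by
  rw [Submodule.eq_bot_iff]
  rintro u ⟨hu, hsupp⟩
  -- Reversing the window and alternating signs turns the chain relation into `Φ v = 0`.
  set v : Fin m → V := fun q => (q : ℤ).negOnePow • u (c + m - 1 - q)
  have hext (i : ℤ) : extendZero R m v i = i.negOnePow • u (c + m - 1 - i) := by
    by_cases hi : i ∈ Ico 0 (m : ℤ)
    · lift i to ℕ using hi.1
      exact extendZero_apply_coe v ⟨i, by simpa using hi.2⟩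
    · rw [extendZero_apply_of_notMem v hi, hsupp _ (by simp only [mem_Ico] at hi ⊢; omega),
        smul_zero]
  have hv0 : v = 0 := by
    refine h (funext fun p => ?_)
    rw [map_zero, Pi.zero_apply, bidiagonalMap_apply, hext, hext, Int.negOnePow_sub,
      show c + m - 1 - ((p : ℤ) - 1) = c + m - 1 - p + 1 by ring]
    simp [Units.smul_def, hu]
  funext i
  have hi := hext (c + m - 1 - i)
  rw [hv0, map_zero, sub_sub_cancel] at hi
  exact (smul_eq_zero_iff_eq _).1 hi.symm

theorem extendZero_mem_chains {m : ℕ} {b₀ b₁ : V →ₗ[R] W} {v : Fin m → V}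
    (hv : bidiagonalMap m b₁ (-b₀) v = 0) : extendZero R m v ∈ chains b₀ b₁ (Ico 0 m) := by
  refine ⟨fun i => ?_, fun i hi => extendZero_apply_of_notMem v hi⟩
  by_cases hi : i + 1 ∈ Ico 0 (m + 1 : ℤ)
  · have hrow := congrFun hv ⟨(i + 1).toNat, by have := hi.2; omega⟩
    rw [bidiagonalMap_apply, Int.toNat_of_nonneg hi.1, add_sub_cancel_right] at hrow
    exact (add_neg_eq_zero.1 hrow).symm
  · rw [extendZero_apply_of_notMem v, extendZero_apply_of_notMem v, map_zero, map_zero] <;>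
      simp only [mem_Ico] at hi ⊢ <;> omega

theorem add_right_mem_chains {b₀ b₁ : V →ₗ[R] W} {S : Set ℤ} {u : ℤ → V}
    (hu : u ∈ chains b₀ b₁ S) (c : ℤ) :
    (fun i => u (i + c)) ∈ chains b₀ b₁ ((· + c) ⁻¹' S) :=
  ⟨fun i => by rw [hu.1, add_right_comm], fun i hi => hu.2 _ hi⟩

theorem chains_mono (b₀ b₁ : V →ₗ[R] W) {S T : Set ℤ} (h : S ⊆ T) :
    chains b₀ b₁ S ≤ chains b₀ b₁ T :=
  fun _ hu => ⟨hu.1, fun i hi => hu.2 i fun hS => hi (h hS)⟩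

theorem indicator_Iio_mem_chains {b₀ b₁ : V →ₗ[R] W} {S : Set ℤ} {u : ℤ → V} {c : ℤ}
    (hu : u ∈ chains b₀ b₁ S) (hc : u c = 0) :
    (Iio c).indicator u ∈ chains b₀ b₁ (S ∩ Iio c) := by
  refine ⟨fun i => ?_, fun i hi => ?_⟩
  · rcases lt_trichotomy (i + 1) c with h | rfl | h
    · simp [indicator, h, (lt_add_one i).trans h, hu.1]
    · simp [indicator, hu.1, hc]
    · simp [indicator, h.not_gt, (Int.lt_add_one_iff.1 h).not_gt]
  · simp only [mem_inter_iff, not_and'] at hi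
    exact indicator_apply_eq_zero.2 fun h => hu.2 i (hi h)

theorem indicator_Ioi_mem_chains {b₀ b₁ : V →ₗ[R] W} {S : Set ℤ} {u : ℤ → V} {c : ℤ}
    (hu : u ∈ chains b₀ b₁ S) (hc : u c = 0) :
    (Ioi c).indicator u ∈ chains b₀ b₁ (S ∩ Ioi c) := by
  refine ⟨fun i => ?_, fun i hi => ?_⟩
  · rcases lt_trichotomy c i with h | rfl | h
    · simp [indicator, h, h.trans (lt_add_one i), hu.1]
    · simp [indicator, ← hu.1, hc]
    · simp [indicator, h.not_gt, (Int.add_one_le_iff.2 h).not_gt]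
  · simp only [mem_inter_iff, not_and'] at hi
    exact indicator_apply_eq_zero.2 fun h => hu.2 i (hi h)

section Independence

variable {b₀ b₁ : V →ₗ[R] W} {m : ℕ} (hbot : ∀ c : ℤ, chains b₀ b₁ (Ico c (c + m)) = ⊥)
include hbot

theorem eq_zero_of_mem_chains_of_subset {S : Set ℤ} {u : ℤ → V} (hu : u ∈ chains b₀ b₁ S) (c : ℤ)
    (hS : S ⊆ Ico c (c + m)) : u = 0 := by
  simpa [hbot] using chains_mono b₀ b₁ hS hu

theorem eq_zero_of_mem_chains_of_apply_zero {u : ℤ → V}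
    (hu : u ∈ chains b₀ b₁ (Icc (-m : ℤ) m)) (h0 : u 0 = 0) : u = 0 := by
  have hneg := eq_zero_of_mem_chains_of_subset hbot (indicator_Iio_mem_chains hu h0) (-m)
    fun i hi => by simp only [mem_inter_iff, mem_Icc, mem_Iio, mem_Ico] at hi ⊢; omega
  have hpos := eq_zero_of_mem_chains_of_subset hbot (indicator_Ioi_mem_chains hu h0) 1
    fun i hi => by simp only [mem_inter_iff, mem_Icc, mem_Ioi, mem_Ico] at hi ⊢; omega
  funext i
  rcases lt_trichotomy i 0 with h | rfl | h
  · simpa [h] using congrFun hneg i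
  · exact h0
  · simpa [h] using congrFun hpos i

theorem eq_zero_of_sum_translates_eq_zero {n : ℕ} {k : Fin n → ℤ → V}
    (hk : ∀ j, k j ∈ chains b₀ b₁ (Icc 0 m)) (hsum : ∀ l : ℤ, ∑ j, k j (l + j) = 0) : k = 0 := by
  induction n with
  | zero => exact Subsingleton.elim _ _
  | succ n ih =>
    have hvanish (j : Fin (n + 1)) {i : ℤ} (hi : i < 0) : k j i = 0 :=
      (hk j).2 i fun h => hi.not_ge h.1
    -- At `-n` only the last translate contributes.
    have hlast0 : k (Fin.last n) 0 = 0 := by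
      simpa [Fin.sum_univ_castSucc, hvanish] using hsum (-n)
    have hlast : k (Fin.last n) = 0 :=
      eq_zero_of_mem_chains_of_apply_zero hbot
        (chains_mono b₀ b₁ (Icc_subset_Icc_left (by simp)) (hk _)) hlast0
    have hinit := ih (fun j => hk j.castSucc) fun l => by
      simpa [Fin.sum_univ_castSucc, hlast] using hsum l
    exact funext (Fin.lastCases hlast (congrFun hinit))

theorem eq_zero_of_sum_diagonal_eq_zero {k : Fin (m + 1) → ℤ → V}
    (hk : ∀ j, k j ∈ chains b₀ b₁ (Icc 0 m)) (hsum : ∑ j, k j j = 0) : k = 0 := by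
  have hP : ∑ j, (fun l : ℤ => k j (l + j)) ∈ chains b₀ b₁ (Icc (-m : ℤ) m) :=
    Submodule.sum_mem _ fun j _ => chains_mono b₀ b₁
      (fun i hi => by simp only [mem_preimage, mem_Icc] at hi ⊢; omega)
      (add_right_mem_chains (hk j) j)
  have hP0 := eq_zero_of_mem_chains_of_apply_zero hbot hP (by simpa using hsum)
  exact eq_zero_of_sum_translates_eq_zero hbot hk fun l => by simpa using congrFun hP0 l

theorem linearIndependent_chain_values {ι : Type*} [Finite ι] {k : ι → ℤ → V}
    (hli : LinearIndependent R k) (hk : ∀ s, k s ∈ chains b₀ b₁ (Icc 0 m)) :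
    LinearIndependent R fun x : Fin (m + 1) × ι => k x.2 x.1 := by
  cases nonempty_fintype ι
  rw [Fintype.linearIndependent_iff]
  rintro g hg ⟨j, s⟩
  have hzero := eq_zero_of_sum_diagonal_eq_zero hbot (k := fun j => ∑ s, g (j, s) • k s)
    (fun j => Submodule.sum_mem _ fun s _ => Submodule.smul_mem _ _ (hk s))
    (by simpa [Fintype.sum_prod_type] using hg)
  exact Fintype.linearIndependent_iff.1 hli _ (congrFun hzero j) s

end Independence

end Chains

section Dimension

variable {K V W : Type*} [DivisionRing K] [AddCommGroup V] [Module K V] [FiniteDimensional K V]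
  [AddCommGroup W] [Module K W] [FiniteDimensional K W]

theorem exists_linearIndependent_chains (b₀ b₁ : V →ₗ[K] W) {m r : ℕ}
    (hr : r + (m + 1) * finrank K W ≤ m * finrank K V) :
    ∃ k : Fin r → ℤ → V, LinearIndependent K k ∧ ∀ s, k s ∈ chains b₀ b₁ (Ico 0 m) := by
  set L := bidiagonalMap m b₁ (-b₀)
  have hker : r ≤ finrank K L.ker := by
    have hrank := L.finrank_range_add_finrank_ker
    have hrange := L.range.finrank_le
    simp only [finrank_pi_fintype, Finset.sum_const, Finset.card_univ, Fintype.card_fin,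
      smul_eq_mul] at hrank hrange
    omega
  obtain ⟨f, hf⟩ := exists_linearIndependent_of_le_finrank hker
  refine ⟨fun s => extendZero K m (f s), ?_, fun s => extendZero_mem_chains (f s).2⟩
  exact (hf.map' L.ker.subtype L.ker.ker_subtype).map' _
    (LinearMap.ker_eq_bot.2 (extendZero_injective m))

theorem exists_basis_bidiagonal_normal_form {m a : ℕ} {b₀ b₁ : V →ₗ[K] W}
    (hV : finrank K V = (m + 1) * a) (hW : finrank K W = m * a)
    (hΦ : Function.Injective (bidiagonalMap m b₀ b₁)) :
    ∃ (v : Basis (Fin (m + 1) × Fin a) K V) (w : Basis (Fin m × Fin a) K W),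
      (∀ j s, b₀ (v (j.castSucc, s)) = w (j, s)) ∧ (∀ s, b₀ (v (Fin.last m, s)) = 0) ∧
      (∀ j s, b₁ (v (j.succ, s)) = w (j, s)) ∧ ∀ s, b₁ (v (0, s)) = 0 := by
  obtain ⟨k, hli, hk⟩ := exists_linearIndependent_chains b₀ b₁ (m := m + 1) (r := a)
    (by rw [hV, hW]; apply le_of_eq; ring)
  replace hk (s) : k s ∈ chains b₀ b₁ (Icc 0 m) :=
    chains_mono b₀ b₁ (fun i hi => by simp only [mem_Ico, mem_Icc] at hi ⊢; omega) (hk s)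
  have hvli := linearIndependent_chain_values
    (chains_Ico_eq_bot_of_bidiagonalMap_injective hΦ) hli hk
  let v := Basis.mk hvli (hvli.span_eq_top_of_card_eq_finrank' (by simp [hV])).ge
  have hv (j s) : v (j, s) = k s j := Basis.mk_apply ..
  have hfirst (s) : b₁ (v (0, s)) = 0 := by
    simpa [hv, (hk s).2 (-1) (by simp)] using ((hk s).1 (-1)).symm
  have hlast (s) : b₀ (v (Fin.last m, s)) = 0 := by
    simpa [hv, (hk s).2 (m + 1) (by simp)] using (hk s).1 m
  have hsurj : Function.Surjective b₀ := surjective_of_bidiagonalMap_surjective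
    ((LinearMap.injective_iff_surjective_of_finrank_eq_finrank
      (by simp [finrank_pi_fintype, hV, hW]; ring)).1 hΦ)
  have hspan :
      ⊤ ≤ Submodule.span K (range fun x : Fin m × Fin a => b₀ (v (x.1.castSucc, x.2))) := by
    rw [← LinearMap.range_eq_top.2 hsurj, LinearMap.range_eq_map, ← v.span_eq, Submodule.map_span,
      Submodule.span_le]
    rintro _ ⟨_, ⟨⟨j, s⟩, rfl⟩, rfl⟩
    cases j using Fin.lastCases with
    | last => simp [hlast]
    | cast j => exact Submodule.subset_span ⟨(j, s), rfl⟩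
  let w := basisOfTopLeSpanOfCardEqFinrank _ hspan (by simp [hW])
  have hw (j s) : w (j, s) = b₀ (v (j.castSucc, s)) := by simp [w]
  exact ⟨v, w, fun j s => (hw j s).symm, hlast, fun j s => by simp [hw, hv, (hk s).1], hfirst⟩

end Dimension

section Matrices

/-- The block bidiagonal matrix with `m + 1` block rows and `m` block columns, with `A` on the
diagonal and `B` below it. -/
def blockBidiagonal {ι κ R : Type*} [Zero R] (m : ℕ) (A B : Matrix ι κ R) :
    Matrix (Fin (m + 1) × ι) (Fin m × κ) R :=
  of fun p q =>
    if p.1.val = q.1.val then A p.2 q.2 else if p.1.val = q.1.val + 1 then B p.2 q.2 else 0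

/-- The `r × c` matrix with ones on the `d`-th superdiagonal. For `c = r + d + e` this is
`(0 | I | 0)`, with `d` zero columns before the identity block and `e` after it. -/
def shiftedOne {R : Type*} [Zero R] [One R] {r c : ℕ} (d : ℕ) : Matrix (Fin r) (Fin c) R :=
  of fun i j => if j.val = i.val + d then 1 else 0

theorem blockBidiagonal_mulVec {ι κ R : Type*} [Fintype κ] [CommRing R] {m : ℕ}
    (A B : Matrix ι κ R) (v : Fin m → κ → R) :
    blockBidiagonal m A B *ᵥ (fun q => v q.1 q.2) =
      fun p => bidiagonalMap m A.mulVecLin B.mulVecLin v p.1 p.2 := by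
  funext ⟨p, x⟩
  rw [bidiagonalMap_apply, extendZero_apply, extendZero_apply, map_sum, map_sum,
    ← Finset.sum_add_distrib, Finset.sum_apply, mulVec, dotProduct, Fintype.sum_prod_type]
  refine Finset.sum_congr rfl fun q _ => ?_
  have hsub : (p : ℤ) - 1 = q ↔ p.val = q.val + 1 := by omega
  by_cases h0 : p.val = q.val
  · simp [blockBidiagonal, h0, mulVec, dotProduct]
  · by_cases h1 : p.val = q.val + 1 <;> simp [blockBidiagonal, hsub, h0, h1, mulVec, dotProduct]

theorem bidiagonalMap_injective_of_leftInverse {ι κ R : Type*} [Fintype ι] [Fintype κ]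
    [DecidableEq κ] [CommRing R] {m : ℕ} {A B : Matrix ι κ R}
    {Ψ : Matrix (Fin m × κ) (Fin (m + 1) × ι) R} (hΨ : Ψ * blockBidiagonal m A B = 1) :
    Function.Injective (bidiagonalMap m A.mulVecLin B.mulVecLin) := by
  refine (injective_iff_map_eq_zero _).2 fun v hv => ?_
  have hker := blockBidiagonal_mulVec A B v
  rw [hv] at hker
  have hv0 := congrArg (Ψ *ᵥ ·) hker
  simp only [mulVec_mulVec, hΨ, one_mulVec] at hv0
  funext q x
  simpa using congrFun (hv0.trans (mulVec_zero Ψ)) (q, x)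

theorem toMatrix_reindex_eq_shiftedOne {R V W : Type*} [CommRing R] [AddCommGroup V] [Module R V]
    [AddCommGroup W] [Module R W] {l m a d : ℕ} (v : Basis (Fin l × Fin a) R V)
    (w : Basis (Fin m × Fin a) R W) {f : V →ₗ[R] W} {σ : Fin m → Fin l}
    (hσ : ∀ j, a * (σ j).val = a * j.val + d) (hf : ∀ j s, f (v (σ j, s)) = w (j, s))
    (hf0 : ∀ j ∉ range σ, ∀ s, f (v (j, s)) = 0) :
    LinearMap.toMatrix (v.reindex finProdFinEquiv) (w.reindex finProdFinEquiv) f =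
      shiftedOne d := by
  have hval (j) (s : Fin a) :
      (finProdFinEquiv (σ j, s)).val = (finProdFinEquiv (j, s)).val + d := by
    simp [hσ, add_assoc]
  ext x y
  obtain ⟨⟨j, s⟩, rfl⟩ := finProdFinEquiv.surjective x
  obtain ⟨⟨j', s'⟩, rfl⟩ := finProdFinEquiv.surjective y
  rw [LinearMap.toMatrix_apply, Basis.reindex_apply, Basis.repr_reindex_apply,
    Equiv.symm_apply_apply, Equiv.symm_apply_apply, shiftedOne, of_apply]
  by_cases hj : j' ∈ range σ
  · obtain ⟨i, rfl⟩ := hj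
    simp only [hf, Basis.repr_self, Finsupp.single_apply, hval, Nat.add_right_cancel_iff,
      Fin.val_inj, finProdFinEquiv.apply_eq_iff_eq]
  · have hne : (finProdFinEquiv (j', s')).val ≠ (finProdFinEquiv (j, s)).val + d := by
      rw [← hval, Ne, Fin.val_inj, finProdFinEquiv.apply_eq_iff_eq]
      exact fun h => hj ⟨j, (congrArg Prod.fst h).symm⟩
    rw [hf0 j' hj, map_zero, Finsupp.zero_apply, if_neg hne]

theorem exists_GL_mul_mul_inv_eq_toMatrix {ι κ R : Type*} [Fintype ι] [DecidableEq ι] [Fintype κ]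
    [DecidableEq κ] [CommRing R] (v : Basis κ R (κ → R)) (w : Basis ι R (ι → R)) :
    ∃ (χ : GL ι R) (ψ : GL κ R), ∀ A : Matrix ι κ R,
      (χ : Matrix ι ι R) * A * ((ψ⁻¹ : GL κ R) : Matrix κ κ R) =
        LinearMap.toMatrix v w A.mulVecLin := by
  let e := Pi.basisFun R κ
  let f := Pi.basisFun R ι
  refine ⟨⟨w.toMatrix f, f.toMatrix w, w.toMatrix_mul_toMatrix_flip f,
      f.toMatrix_mul_toMatrix_flip w⟩, ⟨v.toMatrix e, e.toMatrix v, v.toMatrix_mul_toMatrix_flip e,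
      e.toMatrix_mul_toMatrix_flip v⟩, fun A => ?_⟩
  have hstd : LinearMap.toMatrix e f A.mulVecLin = A := LinearMap.toMatrix'_toLin' A
  have hbasis := basis_toMatrix_mul_linearMap_toMatrix_mul_basis_toMatrix v e w f A.mulVecLin
  rwa [hstd] at hbasis

end Matrices

theorem pair_normal_form_general {K : Type*} [Field K] {m a : ℕ}
    (β₀ β₁ : Matrix (Fin (m * a)) (Fin ((m + 1) * a)) K)
    (Ψ : Matrix (Fin m × Fin ((m + 1) * a)) (Fin (m + 1) × Fin (m * a)) K)
    (hΨ : Ψ * blockBidiagonal m β₀ β₁ = 1) :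
    ∃ (χ : GL (Fin (m * a)) K) (ψ : GL (Fin ((m + 1) * a)) K),
      (χ : Matrix (Fin (m * a)) (Fin (m * a)) K) * β₀ *
          ((ψ⁻¹ : GL (Fin ((m + 1) * a)) K) : Matrix (Fin ((m + 1) * a)) (Fin ((m + 1) * a)) K) =
            shiftedOne 0 ∧
      (χ : Matrix (Fin (m * a)) (Fin (m * a)) K) * β₁ *
          ((ψ⁻¹ : GL (Fin ((m + 1) * a)) K) : Matrix (Fin ((m + 1) * a)) (Fin ((m + 1) * a)) K) =
            shiftedOne a := by
  obtain ⟨v, w, hβ₀, hβ₀_last, hβ₁, hβ₁_first⟩ := exists_basis_bidiagonal_normal_form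
    (finrank_fin_fun K) (finrank_fin_fun K) (bidiagonalMap_injective_of_leftInverse hΨ)
  obtain ⟨χ, ψ, hχψ⟩ := exists_GL_mul_mul_inv_eq_toMatrix
    (v.reindex finProdFinEquiv) (w.reindex finProdFinEquiv)
  refine ⟨χ, ψ, (hχψ β₀).trans ?_, (hχψ β₁).trans ?_⟩
  · refine toMatrix_reindex_eq_shiftedOne v w (σ := Fin.castSucc) (by simp) hβ₀ fun j hj => ?_
    cases j using Fin.lastCases with
    | last => exact hβ₀_last
    | cast j => exact absurd (mem_range_self j) hj
  · refine toMatrix_reindex_eq_shiftedOne v w (σ := Fin.succ) (by simp [mul_add]) hβ₁ fun j hj => ?_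
    cases j using Fin.cases with
    | zero => exact hβ₁_first
    | succ j => exact absurd (mem_range_self j) hj

/-- normal form from the proof of Lemma 6.3: if `Φ` is invertible, then
there exist `χ ∈ GL((n−1)a, ℂ)` and `ψ ∈ GL(na, ℂ)` such that `χ·β₀·ψ⁻¹ = (I | 0)` and
`χ·β₁·ψ⁻¹ = (0 | I)`. -/
theorem pair_normal_form (n a : ℕ) (hn : 2 ≤ n) (ha : 1 ≤ a)
    (β0 β1 : Matrix (Fin ((n - 1) * a)) (Fin (n * a)) ℂ)
    (Ψ : Matrix (Fin (n - 1) × Fin (n * a)) (Fin n × Fin ((n - 1) * a)) ℂ)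
    (hΨ1 : PhiMat n a β0 β1 * Ψ = 1) (hΨ2 : Ψ * PhiMat n a β0 β1 = 1) :
    ∃ (χ : GL (Fin ((n - 1) * a)) ℂ) (ψ : GL (Fin (n * a)) ℂ),
      (χ : Matrix (Fin ((n - 1) * a)) (Fin ((n - 1) * a)) ℂ) * β0
          * ((ψ⁻¹ : GL (Fin (n * a)) ℂ) : Matrix (Fin (n * a)) (Fin (n * a)) ℂ) = D0 n a ∧
      (χ : Matrix (Fin ((n - 1) * a)) (Fin ((n - 1) * a)) ℂ) * β1
          * ((ψ⁻¹ : GL (Fin (n * a)) ℂ) : Matrix (Fin (n * a)) (Fin (n * a)) ℂ) = D1 n a := by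
  obtain ⟨m, rfl⟩ : ∃ m, n = m + 1 := ⟨n - 1, by omega⟩
  exact pair_normal_form_general β0 β1 Ψ hΨ2
end

section
/- Let n ≥ 2 and a ≥ 1 be integers, and let D_0 = (I_{(n−1)a} | 0) and D_1 = (0 | I_{(n−1)a}) be the (n−1)a × na matrices whose first (respectively last) (n−1)a columns form the identity matrix. A pair (ψ, χ) ∈ GL(na,ℂ) × GL((n−1)a,ℂ) satisfies χ·D_0 = D_0·ψ and χ·D_1 = D_1·ψ if and only if there exists A ∈ GL(a,ℂ) such that ψ is the block-diagonal matrix with n diagonal blocks all equal to A and χ is the block-diagonal matrix with n−1 diagonal blocks all equal to A. -/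
/-!
Read `ψ` and `χ` as matrices over the ring `S` of `a × a` matrices. The two equations then say that
`χ` is both the upper left and the lower right submatrix of `ψ`, so `ψ` is constant along diagonals,
and that the last column of `ψ` vanishes above its last entry and the first column below its first
entry. Every diagonal of `ψ` except the main one ends in one of these two columns at a zero, so `ψ`
is scalar over `S`, and so is its submatrix `χ`.
-/

open Matrix

/-- The block-diagonal `ma × ma` matrix with `m` diagonal blocks all equal to the
`a × a` matrix `A`. -/
def blockDiagRep (m a : ℕ) (ha : 0 < a) (A : Matrix (Fin a) (Fin a) ℂ) :
    Matrix (Fin (m * a)) (Fin (m * a)) ℂ :=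
  fun i j =>
    if i.val / a = j.val / a then
      A ⟨i.val % a, Nat.mod_lt _ ha⟩ ⟨j.val % a, Nat.mod_lt _ ha⟩
    else 0

section Toeplitz

variable {S : Type*} [Zero S] {k : ℕ} {M : Matrix (Fin (k + 1)) (Fin (k + 1)) S}

theorem toeplitz_eq_zero_of_lt
    (toeplitz : ∀ i j : Fin k, M i.succ j.succ = M i.castSucc j.castSucc)
    (first_col : ∀ i : Fin k, M i.succ 0 = 0) {i j : Fin (k + 1)} (hji : j < i) : M i j = 0 := by
  induction j using Fin.induction generalizing i with
  | zero =>
    obtain ⟨i, rfl⟩ := Fin.exists_succ_eq.2 hji.ne'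
    exact first_col i
  | succ j ih =>
    obtain ⟨i, rfl⟩ := Fin.exists_succ_eq.2 (Fin.ne_zero_of_lt hji)
    rw [toeplitz]
    exact ih (Fin.castSucc_lt_castSucc_iff.2 (Fin.succ_lt_succ_iff.1 hji))

theorem toeplitz_eq_zero_of_gt
    (toeplitz : ∀ i j : Fin k, M i.succ j.succ = M i.castSucc j.castSucc)
    (last_col : ∀ i : Fin k, M i.castSucc (Fin.last k) = 0) {i j : Fin (k + 1)} (hij : i < j) :
    M i j = 0 := by
  induction j using Fin.reverseInduction generalizing i with
  | last =>
    obtain ⟨i, rfl⟩ := Fin.exists_castSucc_eq.2 hij.ne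
    exact last_col i
  | cast j ih =>
    obtain ⟨i, rfl⟩ := Fin.exists_castSucc_eq.2 (Fin.ne_last_of_lt hij)
    rw [← toeplitz]
    exact ih (Fin.succ_lt_succ_iff.2 (Fin.castSucc_lt_castSucc_iff.1 hij))

theorem toeplitz_eq_diagonal
    (toeplitz : ∀ i j : Fin k, M i.succ j.succ = M i.castSucc j.castSucc)
    (first_col : ∀ i : Fin k, M i.succ 0 = 0)
    (last_col : ∀ i : Fin k, M i.castSucc (Fin.last k) = 0) :
    M = diagonal fun _ => M 0 0 := by
  have diag : ∀ i, M i i = M 0 0 :=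
    Fin.induction rfl fun i ih => (toeplitz i i).trans ih
  ext i j
  rcases lt_trichotomy i j with hij | rfl | hji
  · rw [toeplitz_eq_zero_of_gt toeplitz last_col hij, diagonal_apply_ne _ hij.ne]
  · rw [diag, diagonal_apply_eq]
  · rw [toeplitz_eq_zero_of_lt toeplitz first_col hji, diagonal_apply_ne _ hji.ne']

end Toeplitz

/-- The `k × (k + 1)` matrix `(I | 0)` over `S`: the matrix `D₀` when `S` is a ring of `a × a`
matrices and `k = n - 1`. -/
def identityZero (S : Type*) [Zero S] [One S] (k : ℕ) : Matrix (Fin k) (Fin (k + 1)) S :=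
  (1 : Matrix (Fin (k + 1)) (Fin (k + 1)) S).submatrix Fin.castSucc id

/-- The `k × (k + 1)` matrix `(0 | I)` over `S`: the matrix `D₁` when `S` is a ring of `a × a`
matrices and `k = n - 1`. -/
def zeroIdentity (S : Type*) [Zero S] [One S] (k : ℕ) : Matrix (Fin k) (Fin (k + 1)) S :=
  (1 : Matrix (Fin (k + 1)) (Fin (k + 1)) S).submatrix Fin.succ id

section Intertwiners

variable {S : Type*} {k : ℕ} {m : Type*}

theorem identityZero_mul [NonAssocSemiring S] (M : Matrix (Fin (k + 1)) m S) :
    identityZero S k * M = M.submatrix Fin.castSucc id :=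
  one_submatrix_mul _ (Equiv.refl _) M

theorem zeroIdentity_mul [NonAssocSemiring S] (M : Matrix (Fin (k + 1)) m S) :
    zeroIdentity S k * M = M.submatrix Fin.succ id :=
  one_submatrix_mul _ (Equiv.refl _) M

theorem mul_identityZero_eq_iff [NonAssocSemiring S] {M : Matrix m (Fin k) S}
    {N : Matrix m (Fin (k + 1)) S} :
    M * identityZero S k = N ↔
      (∀ i j, M i j = N i j.castSucc) ∧ ∀ i, N i (Fin.last k) = 0 := by
  simp [← Matrix.ext_iff, Fin.forall_fin_succ', mul_apply, identityZero, one_apply, forall_and,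
    eq_comm]

theorem mul_zeroIdentity_eq_iff [NonAssocSemiring S] {M : Matrix m (Fin k) S}
    {N : Matrix m (Fin (k + 1)) S} :
    M * zeroIdentity S k = N ↔ (∀ i, N i 0 = 0) ∧ ∀ i j, M i j = N i j.succ := by
  simp [← Matrix.ext_iff, Fin.forall_fin_succ, mul_apply, zeroIdentity, one_apply, forall_and,
    eq_comm]

theorem intertwines_iff_exists_scalar [Semiring S] {ψ : Matrix (Fin (k + 1)) (Fin (k + 1)) S}
    {χ : Matrix (Fin k) (Fin k) S} :
    (χ * identityZero S k = identityZero S k * ψ ∧ χ * zeroIdentity S k = zeroIdentity S k * ψ) ↔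
      ∃ c : S, ψ = scalar (Fin (k + 1)) c ∧ χ = scalar (Fin k) c := by
  simp only [identityZero_mul, zeroIdentity_mul, mul_identityZero_eq_iff, mul_zeroIdentity_eq_iff,
    submatrix_apply, id_eq]
  constructor
  · rintro ⟨⟨upper_left, last_col⟩, first_col, lower_right⟩
    have ψ_scalar : ψ = scalar (Fin (k + 1)) (ψ 0 0) :=
      toeplitz_eq_diagonal (fun i j => (lower_right i j).symm.trans (upper_left i j))
        first_col last_col
    refine ⟨ψ 0 0, ψ_scalar, ?_⟩
    ext i j
    rw [upper_left, ψ_scalar]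
    simp [diagonal_apply]
  · rintro ⟨c, rfl, rfl⟩
    simp [diagonal_apply, Fin.castSucc_ne_last]

end Intertwiners

theorem isUnit_of_isUnit_scalar {S m : Type*} [Semiring S] [Fintype m] [DecidableEq m] [Nonempty m]
    {c : S} (hc : IsUnit (scalar m c)) : IsUnit c := by
  obtain ⟨i⟩ := ‹Nonempty m›
  obtain ⟨N, mul_N, N_mul⟩ := isUnit_iff_exists.1 hc
  refine isUnit_iff_exists.2 ⟨N i i, ?_, ?_⟩
  · simpa using congr_fun₂ mul_N i i
  · simpa using congr_fun₂ N_mul i i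

section Blocks

variable {R : Type*} {k l m a : ℕ}

/-- The flattening of an `m × l` matrix of `a × a` blocks to an `ma × la` matrix; `finProdFinEquiv`
puts entry `x` of block `i` in position `i * a + x`. -/
def ofBlocks :
    Matrix (Fin m) (Fin l) (Matrix (Fin a) (Fin a) R) ≃ Matrix (Fin (m * a)) (Fin (l * a)) R :=
  (comp (Fin m) (Fin l) (Fin a) (Fin a) R).trans (reindex finProdFinEquiv finProdFinEquiv)

theorem ofBlocks_mul [NonUnitalNonAssocSemiring R]
    (M : Matrix (Fin k) (Fin l) (Matrix (Fin a) (Fin a) R))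
    (N : Matrix (Fin l) (Fin m) (Matrix (Fin a) (Fin a) R)) :
    ofBlocks (M * N) = ofBlocks M * ofBlocks N := by
  simp only [ofBlocks, Equiv.trans_apply, reindex_apply, submatrix_mul_equiv]
  congr 1
  ext p q
  simp [mul_apply, Matrix.sum_apply, Fintype.sum_prod_type]

theorem ofBlocks_one [Zero R] [One R] :
    ofBlocks (1 : Matrix (Fin m) (Fin m) (Matrix (Fin a) (Fin a) R)) = 1 := by
  simp [ofBlocks, comp_one]

theorem isUnit_ofBlocks_iff [Semiring R] {M : Matrix (Fin m) (Fin m) (Matrix (Fin a) (Fin a) R)} :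
    IsUnit (ofBlocks M) ↔ IsUnit M :=
  (isUnit_map_iff (reindexRingEquiv R finProdFinEquiv) _).trans (isUnit_comp_iff ..)

theorem ofBlocks_submatrix_rows (f : Fin k → Fin m)
    (M : Matrix (Fin m) (Fin l) (Matrix (Fin a) (Fin a) R)) :
    ofBlocks (M.submatrix f id) =
      (ofBlocks M).submatrix (fun p => finProdFinEquiv (f p.divNat, p.modNat)) id := by
  ext p q
  simp [ofBlocks]

theorem D0_succ (k a : ℕ) : D0 (k + 1) a = ofBlocks (identityZero _ k) := by
  rw [identityZero, ofBlocks_submatrix_rows, ofBlocks_one]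
  ext p q
  simp [D0, one_apply, Fin.ext_iff, eq_comm, Nat.mod_add_div]

theorem D1_succ (k a : ℕ) : D1 (k + 1) a = ofBlocks (zeroIdentity _ k) := by
  rw [zeroIdentity, ofBlocks_submatrix_rows, ofBlocks_one]
  ext p q
  simp [D1, one_apply, Fin.ext_iff, eq_comm, mul_add, ← add_assoc, Nat.mod_add_div]

theorem blockDiagRep_eq_ofBlocks_scalar (ha : 0 < a) (A : Matrix (Fin a) (Fin a) ℂ) :
    blockDiagRep m a ha A = ofBlocks (scalar (Fin m) A) := by
  ext p q
  simp only [blockDiagRep, ofBlocks, Equiv.trans_apply, reindex_apply, submatrix_apply, comp_apply,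
    scalar_apply, diagonal_apply, finProdFinEquiv_symm_apply, ← Fin.coe_divNat, Fin.val_inj]
  split_ifs <;> rfl

theorem intertwiner_iff_block_diagonal_general [Semiring R]
    {ψ : Matrix (Fin ((k + 1) * a)) (Fin ((k + 1) * a)) R}
    {χ : Matrix (Fin (k * a)) (Fin (k * a)) R} (hψ : IsUnit ψ) :
    (χ * ofBlocks (identityZero (Matrix (Fin a) (Fin a) R) k) =
        ofBlocks (identityZero (Matrix (Fin a) (Fin a) R) k) * ψ ∧
      χ * ofBlocks (zeroIdentity (Matrix (Fin a) (Fin a) R) k) =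
        ofBlocks (zeroIdentity (Matrix (Fin a) (Fin a) R) k) * ψ) ↔
    ∃ A : GL (Fin a) R,
      ψ = ofBlocks (scalar (Fin (k + 1)) (A : Matrix (Fin a) (Fin a) R)) ∧
      χ = ofBlocks (scalar (Fin k) (A : Matrix (Fin a) (Fin a) R)) := by
  obtain ⟨ψ, rfl⟩ := ofBlocks.surjective ψ
  obtain ⟨χ, rfl⟩ := ofBlocks.surjective χ
  simp only [← ofBlocks_mul, ofBlocks.injective.eq_iff, intertwines_iff_exists_scalar]
  constructor
  · rintro ⟨A, rfl, rfl⟩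
    obtain ⟨A, rfl⟩ := isUnit_of_isUnit_scalar (isUnit_ofBlocks_iff.1 hψ)
    exact ⟨A, rfl, rfl⟩
  · rintro ⟨A, hA⟩
    exact ⟨A, hA⟩

end Blocks

/-- stabilizer computation from the proof of Lemma 6.3: a pair
`(ψ, χ) ∈ GL(na,ℂ) × GL((n−1)a,ℂ)` satisfies `χ·D₀ = D₀·ψ` and `χ·D₁ = D₁·ψ` if and only
if there exists `A ∈ GL(a,ℂ)` such that `ψ` is block diagonal with `n` diagonal blocks
equal to `A` and `χ` is block diagonal with `n−1` diagonal blocks equal to `A`. -/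
theorem intertwiner_iff_block_diagonal (n a : ℕ) (hn : 2 ≤ n) (ha : 0 < a)
    (ψ : GL (Fin (n * a)) ℂ) (χ : GL (Fin ((n - 1) * a)) ℂ) :
    ((χ : Matrix (Fin ((n - 1) * a)) (Fin ((n - 1) * a)) ℂ) * D0 n a
        = D0 n a * (ψ : Matrix (Fin (n * a)) (Fin (n * a)) ℂ) ∧
     (χ : Matrix (Fin ((n - 1) * a)) (Fin ((n - 1) * a)) ℂ) * D1 n a
        = D1 n a * (ψ : Matrix (Fin (n * a)) (Fin (n * a)) ℂ)) ↔
    ∃ A : GL (Fin a) ℂ,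
      (ψ : Matrix (Fin (n * a)) (Fin (n * a)) ℂ)
          = blockDiagRep n a ha (A : Matrix (Fin a) (Fin a) ℂ) ∧
      (χ : Matrix (Fin ((n - 1) * a)) (Fin ((n - 1) * a)) ℂ)
          = blockDiagRep (n - 1) a ha (A : Matrix (Fin a) (Fin a) ℂ) := by
  obtain ⟨k, rfl⟩ := Nat.exists_eq_add_of_le' (Nat.one_le_of_lt hn)
  simpa only [D0_succ, D1_succ, blockDiagRep_eq_ofBlocks_scalar] using!
    intertwiner_iff_block_diagonal_general (k := k) (χ := χ.val) ψ.isUnit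
end
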